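/- Let L_{K3[3]} = U ⊕ U ⊕ U ⊕ E₈ ⊕ E₈ ⊕ [−4] (an even lattice of signature (3, 20)). Let H, D ∈ L_{K3[3]} be orthogonal primitive vectors with H² = 4, div(H, L) = 2, D² = −12, div(D, L) = 2. Then (H + D)/2 lies in L_{K3[3]}-rational span and the ℤ-module M generated by H and (H+D)/2 is an even lattice containing ⟨H, D⟩ with index 2, M has Gram matrix [[4, 2], [2, −2]] in the basis (H, (H+D)/2), M has determinant −12, and M admits no proper even overlattice in M ⊗ ℚ. -/

import Mathlib

/-- Gram matrix of the negative definite `E₈` root lattice. -/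
def E8M : Matrix (Fin 8) (Fin 8) ℤ :=
  !![-2, 0, 1, 0, 0, 0, 0, 0;
      0, -2, 0, 1, 0, 0, 0, 0;
      1, 0, -2, 1, 0, 0, 0, 0;
      0, 1, 1, -2, 1, 0, 0, 0;
      0, 0, 0, 1, -2, 1, 0, 0;
      0, 0, 0, 0, 1, -2, 1, 0;
      0, 0, 0, 0, 0, 1, -2, 1;
      0, 0, 0, 0, 0, 0, 1, -2]

/-- Index type for `L_{K3[3]} = U^{⊕3} ⊕ E₈^{⊕2} ⊕ [-4]`, of rank 23. -/
abbrev I33 : Type := (Fin 3 × Fin 2) ⊕ ((Fin 2 × Fin 8) ⊕ Fin 1)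

/-- Gram matrix of `L_{K3[3]} = U^{⊕3} ⊕ E₈^{⊕2} ⊕ [-4]`. -/
def g33 : I33 → I33 → ℤ
  | Sum.inl (a, i), Sum.inl (b, j) => if a = b ∧ i ≠ j then 1 else 0
  | Sum.inr (Sum.inl (a, i)), Sum.inr (Sum.inl (b, j)) => if a = b then E8M i j else 0
  | Sum.inr (Sum.inr _), Sum.inr (Sum.inr _) => -4
  | _, _ => 0

/-- The bilinear form of `L_{K3[3]}` extended to `L_{K3[3]} ⊗ ℚ`. -/
def bfQ (x y : I33 → ℚ) : ℚ := ∑ i : I33, ∑ j : I33, x i * (g33 i j : ℚ) * y j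

/-- The lattice `L_{K3[3]}` sitting inside `L_{K3[3]} ⊗ ℚ` as the integral points. -/
def L33 : Submodule ℤ (I33 → ℚ) :=
  LinearMap.range (LinearMap.pi fun i =>
    ((Int.castAddHom ℚ).toIntLinearMap.comp (LinearMap.proj i) :
      (I33 → ℤ) →ₗ[ℤ] ℚ))

/-- `v` is a primitive vector of the set `S`. -/
def PrimVec (S : Set (I33 → ℚ)) (v : I33 → ℚ) : Prop :=
  v ∈ S ∧ ∀ (n : ℤ) (w : I33 → ℚ), w ∈ S → v = n • w → IsUnit n

/-!
The Gram matrix of `L_{K3[3]}` is unimodular away from the summand `[-4]`. Hence a vector pairing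
evenly with the lattice has even coordinates outside that summand, and if it is primitive its last
coordinate is odd. Two such vectors are congruent modulo `2`, so `(H + D) / 2` is integral.

The binary form attached to `⟨H, (H + D) / 2⟩` has discriminant `12`, a fundamental discriminant.
An even overlattice containing a primitive vector divided by `s` would exhibit this discriminant as
`s ^ 2` times another discriminant, so there is no proper one.
-/

open Matrix Submodule
open LinearMap (BilinForm)
open scoped Kronecker

section HalfSum

variable {A : Type*} [AddCommGroup A] {u v e : A}

theorem span_pair_le_span_pair_of_two_smul_eq_add (h : (2 : ℤ) • e = u + v) :
    span ℤ {u, v} ≤ span ℤ {u, e} := by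
  rw [span_le, Set.pair_subset_iff]
  refine ⟨mem_span_of_mem (by simp), mem_span_pair.2 ⟨-1, 2, ?_⟩⟩
  rw [h]
  module

theorem mem_or_sub_mem_span_pair_of_two_smul_eq_add (h : (2 : ℤ) • e = u + v) {x : A}
    (hx : x ∈ span ℤ {u, e}) : x ∈ span ℤ {u, v} ∨ x - e ∈ span ℤ {u, v} := by
  obtain ⟨m, n, rfl⟩ := mem_span_pair.1 hx
  obtain rfl : v = (2 : ℤ) • e - u := by rw [h, add_sub_cancel_left]
  obtain ⟨c, rfl | rfl⟩ := n.even_or_odd'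
  · exact .inl (mem_span_pair.2 ⟨m + c, c, by module⟩)
  · exact .inr (mem_span_pair.2 ⟨m + c, c, by module⟩)

theorem notMem_span_pair_of_two_smul_eq_add (h : (2 : ℤ) • e = u + v)
    (hli : LinearIndependent ℤ ![u, v]) : e ∉ span ℤ {u, v} := by
  intro he
  obtain ⟨m, n, rfl⟩ := mem_span_pair.1 he
  have hrel : (2 * m - 1) • u + (2 * n - 1) • v = 0 := by
    rw [← sub_eq_zero] at h
    rw [← h]
    module
  have := (LinearIndependent.pair_iff.1 hli _ _ hrel).1
  omega

end HalfSum

/-- An integer `Δ ≡ 0, 1 mod 4`, i.e. a discriminant of an integral binary quadratic form, which is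
not a nontrivial square times another such integer. With this convention `1` is fundamental. -/
def IsFundamentalDiscriminant (Δ : ℤ) : Prop :=
  (Δ % 4 = 0 ∨ Δ % 4 = 1) ∧ ∀ s d : ℤ, Δ = s ^ 2 * d → d % 4 = 0 ∨ d % 4 = 1 → IsUnit s

theorem isFundamentalDiscriminant_twelve : IsFundamentalDiscriminant 12 := by
  refine ⟨by decide, fun s d hsd hd => ?_⟩
  have hle : s ^ 2 ≤ 12 := Int.le_of_dvd (by norm_num) ⟨d, hsd⟩
  obtain ⟨hlo, hhi⟩ : -4 < s ∧ s < 4 := abs_lt_of_sq_lt_sq' (by linarith) (by norm_num)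
  rw [Int.isUnit_iff]
  interval_cases s <;> lia

theorem sq_sub_four_mul_emod_four (t k : ℤ) :
    (t ^ 2 - 4 * k) % 4 = 0 ∨ (t ^ 2 - 4 * k) % 4 = 1 := by
  obtain ⟨c, rfl | rfl⟩ := t.even_or_odd'
  · left
    ring_nf
    omega
  · right
    ring_nf
    omega

theorem exists_isCoprime_mul_eq (a b : ℚ) :
    ∃ (c : ℚ) (m n : ℤ), IsCoprime m n ∧ c * m = a ∧ c * n = b := by
  obtain ⟨m, n, hm, hn, hmn⟩ := extract_gcd (a.num * b.den) (b.num * a.den)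
  set g := gcd (a.num * b.den) (b.num * a.den)
  have ha : (a.num * b.den : ℚ) = g * m := by exact_mod_cast hm
  have hb : (b.num * a.den : ℚ) = g * n := by exact_mod_cast hn
  refine ⟨g / (a.den * b.den), m, n, (gcd_isUnit_iff m n).1 hmn, ?_, ?_⟩
  · rw [div_mul_eq_mul_div, ← ha, mul_div_mul_right _ _ (by positivity), Rat.num_div_den]
  · rw [div_mul_eq_mul_div, ← hb, mul_comm (a.den : ℚ), mul_div_mul_right _ _ (by positivity),
      Rat.num_div_den]

section BinaryLattice

variable {V : Type*} [AddCommGroup V] [Module ℚ V] {B : BilinForm ℚ V} {u v e : V}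
  {M : Submodule ℤ V}

theorem linearIndependent_int_pair_of_apply_eq_zero (huv : B u v = 0) (hu : B u u ≠ 0)
    (hv : B v v ≠ 0) : LinearIndependent ℤ ![u, v] := by
  refine LinearIndependent.pair_iff.2 fun m n hmn => ?_
  have hm : B u (m • u + n • v) = 0 := by rw [hmn, map_zero]
  have hn : B (m • u + n • v) v = 0 := by rw [hmn, map_zero, LinearMap.zero_apply]
  simp only [map_add, map_zsmul, LinearMap.add_apply, LinearMap.smul_apply, zsmul_eq_mul, huv]
    at hm hn
  simpa [hu, hv] using And.intro hm hn

theorem two_mul_apply_of_two_smul_eq_add (h : (2 : ℤ) • e = u + v) (huv : B u v = 0) :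
    2 * B u e = B u u := by
  simpa [huv] using congrArg (B u) h

theorem four_mul_apply_self_of_two_smul_eq_add (hB : B.IsSymm) (h : (2 : ℤ) • e = u + v)
    (huv : B u v = 0) : 4 * B e e = B u u + B v v := by
  have hsq : B ((2 : ℤ) • e) ((2 : ℤ) • e) = B (u + v) (u + v) := by rw [h]
  simp only [map_add, map_zsmul, LinearMap.add_apply, LinearMap.smul_apply, hB.eq v u, huv] at hsq
  simp only [zsmul_eq_mul, Int.cast_ofNat] at hsq
  linarith

/-- The lattice `M` is even for the form `B`: all its vectors have even integral square. When `B` is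
symmetric, polarization makes `B` integral on `M` as well. -/
def IsEvenLattice (B : BilinForm ℚ V) (M : Submodule ℤ V) : Prop :=
  ∀ x ∈ M, ∃ k : ℤ, B x x = 2 * k

theorem IsEvenLattice.exists_int_eq (hB : B.IsSymm) (hM : IsEvenLattice B M) {x y : V}
    (hx : x ∈ M) (hy : y ∈ M) : ∃ n : ℤ, B x y = n := by
  obtain ⟨i, hi⟩ := hM x hx
  obtain ⟨j, hj⟩ := hM y hy
  obtain ⟨k, hk⟩ := hM (x + y) (add_mem hx hy)
  refine ⟨k - i - j, ?_⟩
  simp only [map_add, LinearMap.add_apply, hB.eq y x] at hk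
  push_cast
  linarith

theorem isEvenLattice_span_pair (hB : B.IsSymm) {i j k : ℤ} (hu : B u u = 2 * i) (huv : B u v = j)
    (hv : B v v = 2 * k) : IsEvenLattice B (span ℤ {u, v}) := by
  intro x hx
  obtain ⟨m, n, rfl⟩ := mem_span_pair.1 hx
  refine ⟨m ^ 2 * i + m * n * j + n ^ 2 * k, ?_⟩
  simp only [map_add, map_zsmul, LinearMap.add_apply, LinearMap.smul_apply, zsmul_eq_mul, hu, huv,
    hv, hB.eq v u]
  push_cast
  ring

/-- The discriminant of the binary quadratic form `(x, y) ↦ B (x u + y v) (x u + y v) / 2`, that is,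
minus the determinant of the Gram matrix of `(u, v)`. -/
def gramDisc (B : BilinForm ℚ V) (u v : V) : ℚ :=
  B u v ^ 2 - B u u * B v v

theorem gramDisc_smul_add_smul (hB : B.IsSymm) (a b c d : ℚ) :
    gramDisc B (a • u + b • v) (c • u + d • v) = (a * d - b * c) ^ 2 * gramDisc B u v := by
  simp only [gramDisc, map_add, map_smul, LinearMap.add_apply, LinearMap.smul_apply, smul_eq_mul,
    hB.eq v u]
  ring

theorem IsEvenLattice.den_eq_one_of_smul_mem (hB : B.IsSymm) (hM : IsEvenLattice B M) {Δ : ℤ}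
    (hΔ : IsFundamentalDiscriminant Δ) (hdisc : gramDisc B u v = Δ) (hu : u ∈ M) (hv : v ∈ M)
    {c : ℚ} (hcu : c • u ∈ M) : c.den = 1 := by
  obtain ⟨i, hi⟩ := hM u hu
  obtain ⟨j, hj⟩ := hM v hv
  obtain ⟨b, hb⟩ := hM.exists_int_eq hB hu hv
  obtain ⟨k, hk⟩ := hM _ hcu
  obtain ⟨l, hl⟩ := hM.exists_int_eq hB hcu hv
  have hcop : IsCoprime (c.den : ℤ) c.num := (Rat.isCoprime_num_den c).symm
  have hnum : c * c.den = c.num := Rat.mul_den_eq_num c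
  simp only [map_smul, LinearMap.smul_apply, smul_eq_mul, hi, hb] at hk hl
  obtain ⟨t, rfl⟩ : (c.den : ℤ) ∣ b := by
    refine hcop.dvd_of_dvd_mul_left ⟨l, ?_⟩
    have : (c.num * b : ℚ) = c.den * l := by rw [← hnum, ← hl]; ring
    exact_mod_cast this
  obtain ⟨w, rfl⟩ : (c.den : ℤ) ^ 2 ∣ i := by
    refine (hcop.pow (m := 2) (n := 2)).dvd_of_dvd_mul_left ⟨k, ?_⟩
    have : (c.num ^ 2 * i : ℚ) = c.den ^ 2 * k := by
      rw [← hnum]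
      linear_combination (c.den : ℚ) ^ 2 / 2 * hk
    exact_mod_cast this
  have hfactor : Δ = (c.den : ℤ) ^ 2 * (t ^ 2 - 4 * (w * j)) := by
    have : (Δ : ℚ) = c.den ^ 2 * (t ^ 2 - 4 * (w * j)) := by
      rw [← hdisc, gramDisc, hi, hj, hb]
      push_cast
      ring
    exact_mod_cast this
  exact Nat.isUnit_iff.1 <|
    Int.ofNat_isUnit.1 (hΔ.2 _ _ hfactor (sq_sub_four_mul_emod_four t _))

theorem IsEvenLattice.eq_span_pair (hB : B.IsSymm) (hM : IsEvenLattice B M) {Δ : ℤ}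
    (hΔ : IsFundamentalDiscriminant Δ) (hdisc : gramDisc B u v = Δ) (hle : span ℤ {u, v} ≤ M)
    (hsub : (M : Set V) ⊆ span ℚ {u, v}) : M = span ℤ {u, v} := by
  refine le_antisymm (fun x hx => ?_) hle
  obtain ⟨a, b, rfl⟩ := mem_span_pair.1 (hsub hx)
  obtain ⟨c, m, n, ⟨p, q, hpq⟩, rfl, rfl⟩ := exists_isCoprime_mul_eq a b
  have hmem (r s : ℤ) : (r : ℚ) • u + (s : ℚ) • v ∈ span ℤ {u, v} :=
    mem_span_pair.2 ⟨r, s, by simp only [Int.cast_smul_eq_zsmul]⟩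
  -- Bézout completes the primitive vector `m u + n v` to a basis of `⟨u, v⟩`.
  have hbasis : gramDisc B ((m : ℚ) • u + (n : ℚ) • v) (((-q : ℤ) : ℚ) • u + (p : ℚ) • v) = Δ := by
    have hdet : (m : ℚ) * p - n * (-q : ℤ) = 1 := by
      have : (p : ℚ) * m + q * n = 1 := by exact_mod_cast hpq
      push_cast
      linarith
    rw [gramDisc_smul_add_smul hB, hdet, hdisc, one_pow, one_mul]
  have hx_eq : (c * m) • u + (c * n) • v = c • ((m : ℚ) • u + (n : ℚ) • v) := by module
  rw [hx_eq] at hx ⊢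
  have hc : c.den = 1 := hM.den_eq_one_of_smul_mem hB hΔ hbasis (hle (hmem _ _)) (hle (hmem _ _)) hx
  rw [← Rat.coe_int_num_of_den_eq_one hc, Int.cast_smul_eq_zsmul]
  exact smul_mem _ _ (hmem m n)

end BinaryLattice

theorem dvd_of_forall_dvd_mulVec {ι R : Type*} [Fintype ι] [DecidableEq ι] [CommRing R]
    {A : Matrix ι ι R} (hA : IsUnit A.det) {r : R} {x : ι → R} (h : ∀ i, r ∣ (A *ᵥ x) i) (i : ι) :
    r ∣ x i := by
  choose w hw using h
  refine ⟨(A⁻¹ *ᵥ w) i, ?_⟩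
  have : x = r • (A⁻¹ *ᵥ w) := by
    rw [← mulVec_smul, ← show A *ᵥ x = r • w from funext hw, mulVec_mulVec,
      nonsing_inv_mul _ hA, one_mulVec]
  rw [this, Pi.smul_apply, smul_eq_mul]

theorem E8M_eq_neg : E8M = -CartanMatrix.E₈ := by
  decide

theorem E8M_det : E8M.det = 1 := by
  rw [E8M_eq_neg, det_neg, CartanMatrix.E₈_det]
  decide

theorem of_g33_eq_fromBlocks :
    of g33 = fromBlocks ((1 : Matrix (Fin 3) (Fin 3) ℤ) ⊗ₖ !![0, 1; 1, 0]) 0 0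
      (fromBlocks ((1 : Matrix (Fin 2) (Fin 2) ℤ) ⊗ₖ E8M) 0 0 !![-4]) := by
  decide

theorem of_g33_isSymm : (of g33).IsSymm := by
  decide

/-- `bfQ` as a bundled bilinear form. -/
noncomputable def bilin33 : BilinForm ℚ (I33 → ℚ) :=
  toBilin' ((of g33).map (Int.castRingHom ℚ))

theorem bilin33_apply (x y : I33 → ℚ) : bilin33 x y = bfQ x y := by
  rw [bilin33, toBilin'_apply]
  rfl

theorem bilin33_isSymm : bilin33.IsSymm where
  eq x y := by
    rw [bilin33, toBilin'_apply', toBilin'_apply', dotProduct_mulVec, dotProduct_comm,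
      ← mulVec_transpose, ← transpose_map, of_g33_isSymm.eq]

theorem intCast_comp_mem_L33 (h : I33 → ℤ) : Int.cast ∘ h ∈ L33 := ⟨h, rfl⟩

theorem bilin33_intCast_single (h : I33 → ℤ) (i : I33) :
    bilin33 (Int.cast ∘ h) (Int.cast ∘ Pi.single i 1) = ((of g33 *ᵥ h) i : ℚ) := by
  have hsingle : (Int.cast ∘ Pi.single i (1 : ℤ) : I33 → ℚ) = Pi.single i 1 := by
    ext j
    simp [Pi.single_apply]
  rw [bilin33_isSymm.eq, hsingle, bilin33, toBilin'_apply', single_one_dotProduct]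
  exact ((Int.castRingHom ℚ).map_mulVec _ _ i).symm

theorem dvd_of_dvd_bilin33 {h : I33 → ℤ} {r : ℤ}
    (hdiv : ∀ y ∈ L33, ∃ k : ℤ, bilin33 (Int.cast ∘ h) y = r * k) :
    (∀ p, r ∣ h (.inl p)) ∧ ∀ p, r ∣ h (.inr (.inl p)) := by
  have hmul (i : I33) : r ∣ (of g33 *ᵥ h) i := by
    obtain ⟨k, hk⟩ := hdiv _ (intCast_comp_mem_L33 (Pi.single i 1))
    rw [bilin33_intCast_single] at hk
    exact ⟨k, by exact_mod_cast hk⟩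
  simp only [of_g33_eq_fromBlocks, fromBlocks_mulVec, Sum.forall, Sum.elim_inl, Sum.elim_inr,
    zero_mulVec, add_zero, zero_add] at hmul
  refine ⟨dvd_of_forall_dvd_mulVec ?_ hmul.1, dvd_of_forall_dvd_mulVec ?_ hmul.2.1⟩
  · simp [det_kronecker, det_fin_two]
  · simp [det_kronecker, E8M_det]

theorem PrimVec.isUnit_of_forall_dvd {h : I33 → ℤ} (hprim : PrimVec L33 (Int.cast ∘ h)) {n : ℤ}
    (hn : ∀ i, n ∣ h i) : IsUnit n := by
  choose w hw using hn
  refine hprim.2 n (Int.cast ∘ w) (intCast_comp_mem_L33 w) (funext fun i => ?_)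
  simp [hw i]

/-- The generator of the summand `[-4]` of `L_{K3[3]}`. Half of it represents the element of order
`2` in the discriminant group. -/
def delta33 : I33 → ℤ :=
  Pi.single (.inr (.inr 0)) 1

theorem PrimVec.exists_eq_delta33_add_two_smul {x : I33 → ℚ} (hprim : PrimVec L33 x)
    (hdiv : ∀ y ∈ L33, ∃ k : ℤ, bilin33 x y = 2 * k) :
    ∃ w ∈ L33, x = Int.cast ∘ delta33 + (2 : ℤ) • w := by
  obtain ⟨h, rfl⟩ := hprim.1
  obtain ⟨hU, hE⟩ := dvd_of_dvd_bilin33 (h := h) (r := 2) hdiv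
  have hodd : ¬ 2 ∣ h (.inr (.inr 0)) := fun hN => by
    have hall : ∀ i, 2 ∣ h i := by
      simpa only [Sum.forall, Unique.forall_iff] using ⟨hU, hE, hN⟩
    exact absurd (hprim.isUnit_of_forall_dvd hall) (by decide)
  have hsub : ∀ i, 2 ∣ h i - delta33 i := by
    simp only [Sum.forall, Unique.forall_iff]
    refine ⟨?_, ?_, ?_⟩
    · simpa [delta33] using hU
    · simpa [delta33] using hE
    · simp only [delta33, Fin.default_eq_zero, Pi.single_eq_same]
      lia
  choose w hw using hsub
  refine ⟨Int.cast ∘ w, intCast_comp_mem_L33 w, funext fun i => ?_⟩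
  have : h i = delta33 i + 2 * w i := by rw [← hw]; ring
  simpa using congrArg (Int.cast : ℤ → ℚ) this

theorem exists_mem_L33_two_smul_eq_add {x y : I33 → ℚ} (hx : PrimVec L33 x) (hy : PrimVec L33 y)
    (hxdiv : ∀ z ∈ L33, ∃ k : ℤ, bilin33 x z = 2 * k)
    (hydiv : ∀ z ∈ L33, ∃ k : ℤ, bilin33 y z = 2 * k) :
    ∃ e ∈ L33, (2 : ℤ) • e = x + y := by
  obtain ⟨w, hw, rfl⟩ := hx.exists_eq_delta33_add_two_smul hxdiv
  obtain ⟨z, hz, rfl⟩ := hy.exists_eq_delta33_add_two_smul hydiv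
  exact ⟨Int.cast ∘ delta33 + w + z, add_mem (add_mem (intCast_comp_mem_L33 _) hw) hz, by module⟩

/-- for orthogonal primitive vectors `H, D ∈ L_{K3[3]}` of types
`(4, 2)` and `(-12, 2)`, the vector `E = (H+D)/2` lies in `L_{K3[3]}`, the lattice
`M = ⟨H, E⟩` is even, contains `⟨H, D⟩` with index 2, has Gram matrix
`[[4,2],[2,-2]]` in the basis `(H, E)`, determinant `-12`, and admits no proper
even overlattice in `M ⊗ ℚ`. -/
theorem stmt_7 (H D : I33 → ℚ) (hH : H ∈ L33) (hD : D ∈ L33)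
    (hHprim : PrimVec (L33 : Set (I33 → ℚ)) H)
    (hDprim : PrimVec (L33 : Set (I33 → ℚ)) D)
    (horth : bfQ H D = 0) (hH2 : bfQ H H = 4) (hD2 : bfQ D D = -12)
    (hHdiv : (∀ y ∈ L33, ∃ k : ℤ, bfQ H y = 2 * (k : ℚ)) ∧ ∃ y ∈ L33, bfQ H y = 2)
    (hDdiv : (∀ y ∈ L33, ∃ k : ℤ, bfQ D y = 2 * (k : ℚ)) ∧ ∃ y ∈ L33, bfQ D y = 2) :
    ∃ E : I33 → ℚ, E ∈ L33 ∧ (2 : ℚ) • E = H + D ∧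
      bfQ H E = 2 ∧ bfQ E E = -2 ∧
      E ∉ Submodule.span ℤ ({H, D} : Set (I33 → ℚ)) ∧
      Submodule.span ℤ ({H, D} : Set (I33 → ℚ)) ≤
        Submodule.span ℤ ({H, E} : Set (I33 → ℚ)) ∧
      (∀ x ∈ Submodule.span ℤ ({H, E} : Set (I33 → ℚ)),
        x ∈ Submodule.span ℤ ({H, D} : Set (I33 → ℚ)) ∨
          x - E ∈ Submodule.span ℤ ({H, D} : Set (I33 → ℚ))) ∧
      (∀ x ∈ Submodule.span ℤ ({H, E} : Set (I33 → ℚ)), ∃ k : ℤ,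
        bfQ x x = 2 * (k : ℚ)) ∧
      bfQ H H * bfQ E E - bfQ H E * bfQ H E = -12 ∧
      (∀ M' : Submodule ℤ (I33 → ℚ),
        Submodule.span ℤ ({H, E} : Set (I33 → ℚ)) ≤ M' →
        (M' : Set (I33 → ℚ)) ⊆
          (Submodule.span ℚ ({H, E} : Set (I33 → ℚ)) : Set (I33 → ℚ)) →
        (∀ x ∈ M', ∀ y ∈ M', ∃ n : ℤ, bfQ x y = (n : ℚ)) →
        (∀ x ∈ M', ∃ k : ℤ, bfQ x x = 2 * (k : ℚ)) →
        M' = Submodule.span ℤ ({H, E} : Set (I33 → ℚ))) := by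
  simp only [← bilin33_apply] at *
  have hB := bilin33_isSymm
  obtain ⟨E, hE, hE2⟩ := exists_mem_L33_two_smul_eq_add hHprim hDprim hHdiv.1 hDdiv.1
  have hHE : bilin33 H E = 2 := by
    linarith [two_mul_apply_of_two_smul_eq_add hE2 horth]
  have hEE : bilin33 E E = -2 := by
    linarith [four_mul_apply_self_of_two_smul_eq_add hB hE2 horth]
  have hli : LinearIndependent ℤ ![H, D] :=
    linearIndependent_int_pair_of_apply_eq_zero horth (by norm_num [hH2]) (by norm_num [hD2])
  have hdisc : gramDisc bilin33 H E = (12 : ℤ) := by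
    norm_num [gramDisc, hH2, hHE, hEE]
  have heven : IsEvenLattice bilin33 (span ℤ {H, E}) :=
    isEvenLattice_span_pair hB (i := 2) (j := 2) (k := -1)
      (by norm_num [hH2]) (by norm_num [hHE]) (by norm_num [hEE])
  exact ⟨E, hE, by rwa [ofNat_smul_eq_nsmul ℚ, ← ofNat_smul_eq_nsmul ℤ], hHE, hEE,
    notMem_span_pair_of_two_smul_eq_add hE2 hli,
    span_pair_le_span_pair_of_two_smul_eq_add hE2,
    fun _ => mem_or_sub_mem_span_pair_of_two_smul_eq_add hE2,
    heven,
    by norm_num [hH2, hHE, hEE],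
    fun _ hle hsub _ heven' =>
      IsEvenLattice.eq_span_pair hB heven' isFundamentalDiscriminant_twelve hdisc hle hsub⟩
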